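/- For every integer q ≥ 3 there exist an integer n and a cyclic permutation [φ] of {1,…,n} such that the associated 3-hypergraph H_[φ] satisfies ω(H_[φ]) = q and χ(H_[φ]) = q − 1; hence the bound χ(H) ≤ ω(H) − 1 for cyclic permutation 3-hypergraphs is tight. -/

import Mathlib

open scoped Classical

/-- A `3`-hypergraph: a finite vertex set together with a finite set of edges,
each edge intended to be a 3-element subset of the vertex set. -/
structure ThreeHypergraph (α : Type*) where
  verts : Finset α
  edges : Finset (Finset α)

namespace ThreeHypergraph

variable {α : Type*}

/-- The structural requirements on a `3`-hypergraph: every edge is a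
3-element subset of the vertex set. -/
def IsValid (H : ThreeHypergraph α) : Prop :=
  ∀ e ∈ H.edges, e.card = 3 ∧ e ⊆ H.verts

/-- A proper colouring with `k` colours: a partition of the vertices into (at most)
`k` colour classes such that no edge is contained in a single class. -/
def ProperColoring (H : ThreeHypergraph α) (k : ℕ) : Prop :=
  ∃ c : α → ℕ, (∀ v ∈ H.verts, c v < k) ∧
    ∀ e ∈ H.edges, ¬ ∃ i : ℕ, ∀ v ∈ e, c v = i

/-- The chromatic number: the least `k` admitting a proper colouring. -/
noncomputable def chromaticNumber (H : ThreeHypergraph α) : ℕ :=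
  sInf {k | H.ProperColoring k}

/-- A clique: a set of vertices all of whose 3-element subsets are edges. -/
def IsClique (H : ThreeHypergraph α) (S : Finset α) : Prop :=
  S ⊆ H.verts ∧ ∀ t ⊆ S, t.card = 3 → t ∈ H.edges

/-- The clique number: the largest cardinality of a clique. -/
noncomputable def cliqueNumber (H : ThreeHypergraph α) : ℕ :=
  sSup {m | ∃ S : Finset α, H.IsClique S ∧ S.card = m}

end ThreeHypergraph

/-- `i < j < k` are in clockwise order with respect to the cyclic permutation `[φ]` of
`Fin n` if some representative `ψ` of the cyclic equivalence class of `φ` (i.e. some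
cyclic shift of `φ`) satisfies `ψ⁻¹ i < ψ⁻¹ j < ψ⁻¹ k`. -/
def Clockwise {n : ℕ} (φ : Equiv.Perm (Fin n)) (i j k : Fin n) : Prop :=
  ∃ m : Fin n, φ.symm i + m < φ.symm j + m ∧ φ.symm j + m < φ.symm k + m

/-- The `3`-hypergraph associated to a cyclic permutation `[φ]` of `{1, …, n}`
(encoded as `Fin n`): its edges are the triples `{i, j, k}` with `i < j < k` in
clockwise order with respect to `[φ]`. -/
noncomputable def cyclicPermHG (n : ℕ) (φ : Equiv.Perm (Fin n)) : ThreeHypergraph (Fin n) where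
  verts := Finset.univ
  edges := (Finset.powersetCard 3 (Finset.univ : Finset (Fin n))).filter
    (fun e => ∃ i j k : Fin n, i < j ∧ j < k ∧ Clockwise φ i j k ∧ e = {i, j, k})

/-- Rotating three residues into increasing order is possible exactly when they are already
cyclically ordered. -/
lemma clockwise_iff {n : ℕ} (φ : Equiv.Perm (Fin n)) (i j k : Fin n) :
    Clockwise φ i j k ↔
      ((φ.symm i : ℕ) < φ.symm j ∧ (φ.symm j : ℕ) < φ.symm k) ∨
      ((φ.symm j : ℕ) < φ.symm k ∧ (φ.symm k : ℕ) < φ.symm i) ∨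
      ((φ.symm k : ℕ) < φ.symm i ∧ (φ.symm i : ℕ) < φ.symm j) := by
  unfold Clockwise
  generalize φ.symm i = x
  generalize φ.symm j = y
  generalize φ.symm k = z
  have hx := x.isLt
  have hy := y.isLt
  have hz := z.isLt
  have add_mod (u m : ℕ) (hu : u < n) (hm : m < n) :
      (u + m) % n = if u + m < n then u + m else u + m - n := by
    split_ifs with h
    · exact Nat.mod_eq_of_lt h
    · rw [Nat.mod_eq_sub_mod (by omega), Nat.mod_eq_of_lt (by omega)]
  constructor
  · rintro ⟨m, h₁, h₂⟩
    have hm := m.isLt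
    simp only [Fin.lt_def, Fin.val_add, add_mod _ _ hx hm, add_mod _ _ hy hm,
      add_mod _ _ hz hm] at h₁ h₂
    split_ifs at h₁ h₂ <;> omega
  · intro h
    have rotate (m : ℕ) (hm : m < n)
        (h₁ : (if (x : ℕ) + m < n then (x : ℕ) + m else x + m - n) <
          if (y : ℕ) + m < n then (y : ℕ) + m else y + m - n)
        (h₂ : (if (y : ℕ) + m < n then (y : ℕ) + m else y + m - n) <
          if (z : ℕ) + m < n then (z : ℕ) + m else z + m - n) :
        ∃ m : Fin n, x + m < y + m ∧ y + m < z + m := by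
      refine ⟨⟨m, hm⟩, ?_⟩
      simp only [Fin.lt_def, Fin.val_add, add_mod _ _ hx hm, add_mod _ _ hy hm,
        add_mod _ _ hz hm]
      exact ⟨h₁, h₂⟩
    rcases h with h | h | h
    · exact rotate 0 (by omega) (by split_ifs <;> omega) (by split_ifs <;> omega)
    · exact rotate (n - x) (by omega) (by split_ifs <;> omega) (by split_ifs <;> omega)
    · exact rotate (n - z - 1) (by omega) (by split_ifs <;> omega) (by split_ifs <;> omega)

lemma Finset.exists_lt_lt_of_card_eq_three {α : Type*} [LinearOrder α] {t : Finset α}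
    (ht : t.card = 3) : ∃ i j k : α, i < j ∧ j < k ∧ t = {i, j, k} := by
  have hmono := (t.orderEmbOfFin ht).strictMono
  refine ⟨_, _, _, hmono (show (0 : Fin 3) < 1 by decide),
    hmono (show (1 : Fin 3) < 2 by decide), ?_⟩
  apply Finset.coe_injective
  rw [← Finset.range_orderEmbOfFin t ht]
  ext x
  simp only [Set.mem_range, Fin.exists_fin_succ, Finset.coe_insert, Finset.coe_singleton]
  simp [eq_comm]

lemma mem_cyclicPermHG_edges {n : ℕ} {φ : Equiv.Perm (Fin n)} {i j k : Fin n}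
    (hij : i < j) (hjk : j < k) :
    {i, j, k} ∈ (cyclicPermHG n φ).edges ↔ Clockwise φ i j k := by
  simp only [cyclicPermHG, Finset.mem_filter, Finset.mem_powersetCard, Finset.subset_univ,
    true_and]
  constructor
  · rintro ⟨-, i', j', k', hij', hjk', h, he⟩
    have hi : i' ∈ ({i, j, k} : Finset (Fin n)) := by simp [he]
    have hj : j' ∈ ({i, j, k} : Finset (Fin n)) := by simp [he]
    have hk : k' ∈ ({i, j, k} : Finset (Fin n)) := by simp [he]
    simp only [Finset.mem_insert, Finset.mem_singleton] at hi hj hk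
    have : i' = i ∧ j' = j ∧ k' = k := by omega
    obtain ⟨rfl, rfl, rfl⟩ := this
    exact h
  · intro h
    exact ⟨Finset.card_eq_three.2 ⟨i, j, k, hij.ne, (hij.trans hjk).ne, hjk.ne, rfl⟩,
      i, j, k, hij, hjk, h, rfl⟩

/-- Distinct multiples of `N` in the open interval `(-N, N * m)` number at most `m`. -/
lemma Finset.card_le_of_injOn_dvd {α : Type*} {S : Finset α} {w : α → ℤ} {N : ℤ} {m : ℕ}
    (hN : 0 < N) (hdvd : ∀ j ∈ S, N ∣ w j) (hlo : ∀ j ∈ S, -N < w j)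
    (hhi : ∀ j ∈ S, w j < N * m) (hinj : Set.InjOn w S) : S.card ≤ m := by
  have h : S.card ≤ (Finset.Ico (0 : ℤ) m).card := by
    refine Finset.card_le_card_of_injOn (fun j => w j / N) ?_ ?_
    · intro j hj
      obtain ⟨s, hs⟩ := hdvd j hj
      have h₁ := hlo j hj
      have h₂ := hhi j hj
      rw [hs] at h₁ h₂
      simp only [hs, Int.mul_ediv_cancel_left _ hN.ne', Finset.coe_Ico, Set.mem_Ico]
      exact ⟨by by_contra! hneg; nlinarith, lt_of_mul_lt_mul_left h₂ hN.le⟩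
    · intro j hj k hk hjk
      apply hinj hj hk
      rw [← Int.mul_ediv_cancel' (hdvd j hj), ← Int.mul_ediv_cancel' (hdvd k hk)]
      exact congrArg (N * ·) hjk
  simpa using h

/-- The permutation of `Fin (a² + a + 1)` whose inverse is multiplication by `a`. -/
def mulPerm (a : ℕ) (ha : 1 ≤ a) : Equiv.Perm (Fin (a * a + a + 1)) where
  toFun i := ⟨a * a * i % (a * a + a + 1), Nat.mod_lt _ (by omega)⟩
  invFun i := ⟨a * i % (a * a + a + 1), Nat.mod_lt _ (by omega)⟩
  left_inv i := by
    obtain ⟨b, rfl⟩ := Nat.exists_eq_add_of_le' ha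
    ext
    simp only [Nat.mul_mod_mod]
    rw [show (b + 1) * ((b + 1) * (b + 1) * (i : ℕ)) =
      i + ((b + 1) * (b + 1) + (b + 1) + 1) * (b * i) by ring, Nat.add_mul_mod_self_left,
      Nat.mod_eq_of_lt i.isLt]
  right_inv i := by
    obtain ⟨b, rfl⟩ := Nat.exists_eq_add_of_le' ha
    ext
    simp only [Nat.mul_mod_mod]
    rw [show (b + 1) * (b + 1) * ((b + 1) * (i : ℕ)) =
      i + ((b + 1) * (b + 1) + (b + 1) + 1) * (b * i) by ring, Nat.add_mul_mod_self_left,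
      Nat.mod_eq_of_lt i.isLt]

lemma mulPerm_symm_val (a : ℕ) (ha : 1 ≤ a) (i : Fin (a * a + a + 1)) :
    ((mulPerm a ha).symm i : ℕ) = a * i % (a * a + a + 1) := rfl

section

variable {a : ℕ} {ha : 1 ≤ a}

/-- The position of `j` in the cyclic order, counted from that of `i`. -/
def relPos (ha : 1 ≤ a) (i j : Fin (a * a + a + 1)) : ℤ :=
  ((mulPerm a ha).symm j : ℤ) - ((mulPerm a ha).symm i : ℤ) +
    if (mulPerm a ha).symm i ≤ (mulPerm a ha).symm j then 0 else ((a * a + a + 1 : ℕ) : ℤ)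

lemma relPos_nonneg (i j : Fin (a * a + a + 1)) : 0 ≤ relPos ha i j := by
  unfold relPos
  split_ifs <;> omega

lemma relPos_lt (i j : Fin (a * a + a + 1)) :
    relPos ha i j < ((a * a + a + 1 : ℕ) : ℤ) := by
  unfold relPos
  split_ifs <;> omega

lemma relPos_self (i : Fin (a * a + a + 1)) : relPos ha i i = 0 := by
  simp [relPos]

lemma dvd_mul_sub_relPos (i j : Fin (a * a + a + 1)) :
    ((a * a + a + 1 : ℕ) : ℤ) ∣ a * ((j : ℤ) - i) - relPos ha i j := by
  have key (l : Fin (a * a + a + 1)) :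
      ((a * a + a + 1 : ℕ) : ℤ) ∣ a * (l : ℤ) - ((mulPerm a ha).symm l : ℕ) := by
    rw [mulPerm_symm_val, Int.natCast_mod, Nat.cast_mul]
    exact Int.dvd_self_sub_emod
  obtain ⟨s, hs⟩ := key i
  obtain ⟨t, ht⟩ := key j
  unfold relPos
  split_ifs
  · exact ⟨t - s, by linear_combination ht - hs⟩
  · exact ⟨t - s - 1, by linear_combination ht - hs⟩

lemma clockwise_iff_relPos_lt {i j k : Fin (a * a + a + 1)} (hij : i < j) (hjk : j < k) :
    Clockwise (mulPerm a ha) i j k ↔ relPos ha i j < relPos ha i k := by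
  have hne {x y : Fin (a * a + a + 1)} (h : x < y) :
      ((mulPerm a ha).symm x : ℕ) ≠ (mulPerm a ha).symm y := fun he =>
    h.ne ((mulPerm a ha).symm.injective (Fin.ext he))
  have h₁ := hne hij
  have h₂ := hne hjk
  have h₃ := hne (hij.trans hjk)
  rw [clockwise_iff]
  simp only [relPos, Fin.le_def]
  split_ifs <;> omega

lemma card_le_of_isClique {S : Finset (Fin (a * a + a + 1))}
    (hS : (cyclicPermHG _ (mulPerm a ha)).IsClique S) : S.card ≤ a + 2 := by
  rcases S.eq_empty_or_nonempty with rfl | hne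
  · simp
  set i := S.min' hne
  have hi : i ∈ S := S.min'_mem hne
  have hle (j) (hj : j ∈ S) : i ≤ j := S.min'_le j hj
  have hmono : StrictMonoOn (fun j => (a + 1) * relPos ha i j + ((j : ℤ) - i)) S := by
    intro j hj k hk hjk
    have hg : relPos ha i j ≤ relPos ha i k := by
      rcases (hle j hj).eq_or_lt with h | h
      · rw [← h, relPos_self]
        exact relPos_nonneg _ _
      · refine ((clockwise_iff_relPos_lt h hjk).1
          ((mem_cyclicPermHG_edges h hjk).1 (hS.2 _ ?_ ?_))).le
        · simp [Finset.insert_subset_iff, hi, Finset.mem_coe.1 hj, Finset.mem_coe.1 hk]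
        · exact Finset.card_eq_three.2 ⟨i, j, k, h.ne, (h.trans hjk).ne, hjk.ne, rfl⟩
    have : (j : ℤ) < k := by exact_mod_cast hjk
    dsimp only
    nlinarith
  refine Finset.card_le_of_injOn_dvd (N := ((a * a + a + 1 : ℕ) : ℤ)) (by positivity)
    (fun j _ => ?_) (fun j hj => ?_) (fun j hj => ?_) hmono.injOn
  · obtain ⟨s, hs⟩ := dvd_mul_sub_relPos (ha := ha) i j
    refine ⟨(j : ℤ) - i - (a + 1) * s, ?_⟩
    have : relPos ha i j = a * ((j : ℤ) - i) - ((a * a + a + 1 : ℕ) : ℤ) * s := by linarith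
    rw [this]
    push_cast
    ring
  · have := relPos_nonneg (ha := ha) i j
    have hij : (i : ℤ) ≤ j := by exact_mod_cast hle j hj
    have : 0 ≤ (a + 1) * relPos ha i j := by positivity
    push_cast
    nlinarith
  · have := relPos_lt (ha := ha) i j
    have hj : (j : ℤ) < ((a * a + a + 1 : ℕ) : ℤ) := by exact_mod_cast j.isLt
    push_cast at *
    nlinarith [Int.natCast_nonneg (i : ℕ)]

lemma card_le_of_independent {S : Finset (Fin (a * a + a + 1))}
    (hS : ∀ i ∈ S, ∀ j ∈ S, ∀ k ∈ S, i < j → j < k → ¬ Clockwise (mulPerm a ha) i j k) :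
    S.card ≤ a + 1 := by
  rcases S.eq_empty_or_nonempty with rfl | hne
  · simp
  set i := S.min' hne
  have hi : i ∈ S := S.min'_mem hne
  have hlt (j) (hj : j ∈ S.erase i) : i < j :=
    lt_of_le_of_ne (S.min'_le j (Finset.mem_of_mem_erase hj)) (Finset.ne_of_mem_erase hj).symm
  have hmono : StrictMonoOn (fun j : Fin (a * a + a + 1) => a * ((j : ℤ) - i) - relPos ha i j) (S.erase i) := by
    intro j hj k hk hjk
    have hg : relPos ha i k ≤ relPos ha i j := not_lt.1 fun h =>
      hS i hi j (Finset.mem_of_mem_erase hj) k (Finset.mem_of_mem_erase hk) (hlt j hj) hjk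
        ((clockwise_iff_relPos_lt (hlt j hj) hjk).2 h)
    have : (j : ℤ) < k := by exact_mod_cast hjk
    have : (1 : ℤ) ≤ a := by exact_mod_cast ha
    dsimp only
    nlinarith
  have hcard : (S.erase i).card ≤ a := by
    refine Finset.card_le_of_injOn_dvd (N := ((a * a + a + 1 : ℕ) : ℤ)) (by positivity)
      (fun j _ => dvd_mul_sub_relPos i j) (fun j hj => ?_) (fun j hj => ?_) hmono.injOn
    · have := relPos_lt (ha := ha) i j
      have hij : (i : ℤ) < j := by exact_mod_cast hlt j hj
      have : 0 ≤ a * ((j : ℤ) - i) := mul_nonneg (by positivity) (by linarith)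
      linarith
    · have := relPos_nonneg (ha := ha) i j
      have hj : (j : ℤ) < ((a * a + a + 1 : ℕ) : ℤ) := by exact_mod_cast j.isLt
      have : (1 : ℤ) ≤ a := by exact_mod_cast ha
      nlinarith [Int.natCast_nonneg (i : ℕ)]
  rw [Finset.card_erase_of_mem hi] at hcard
  omega

lemma exists_isClique_card_eq :
    ∃ S, (cyclicPermHG _ (mulPerm a ha)).IsClique S ∧ S.card = a + 2 := by
  have hle : a + 2 ≤ a * a + a + 1 := by nlinarith
  refine ⟨Finset.univ.map (Fin.castLEEmb hle), ⟨Finset.subset_univ _, fun t ht htc => ?_⟩,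
    by simp⟩
  obtain ⟨i, j, k, hij, hjk, rfl⟩ := Finset.exists_lt_lt_of_card_eq_three htc
  have hk : (k : ℕ) < a + 2 := by
    have : k ∈ Finset.univ.map (Fin.castLEEmb hle) := ht (by simp)
    obtain ⟨l, -, rfl⟩ := Finset.mem_map.1 this
    exact l.isLt
  rw [mem_cyclicPermHG_edges hij hjk, clockwise_iff]
  have hij' : (i : ℕ) < j := hij
  have hjk' : (j : ℕ) < k := hjk
  simp only [mulPerm_symm_val]
  rw [Nat.mod_eq_of_lt (by nlinarith : a * (i : ℕ) < a * a + a + 1),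
    Nat.mod_eq_of_lt (by nlinarith : a * (j : ℕ) < a * a + a + 1),
    Nat.mod_eq_of_lt (by nlinarith : a * (k : ℕ) < a * a + a + 1)]
  exact Or.inl ⟨by nlinarith, by nlinarith⟩

/-- Within a residue class modulo `a + 1`, multiplication by `a` modulo `a² + a + 1` reverses the
order of the positive elements. -/
lemma mulPerm_symm_lt {i j : Fin (a * a + a + 1)} (hi : 0 < (i : ℕ)) (hij : i < j)
    (hmod : (i : ℕ) % (a + 1) = j % (a + 1)) :
    ((mulPerm a ha).symm j : ℕ) < (mulPerm a ha).symm i := by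
  obtain ⟨x, hx⟩ := i
  obtain ⟨y, hy⟩ := j
  simp only [Fin.mk_lt_mk] at hi hij hmod
  simp only [mulPerm_symm_val]
  have hx' := Nat.div_add_mod x (a + 1)
  have hy' := Nat.div_add_mod y (a + 1)
  rw [← hmod] at hy'
  have hr := Nat.mod_lt x (show a + 1 > 0 by omega)
  generalize x % (a + 1) = r at *
  generalize x / (a + 1) = u at *
  generalize y / (a + 1) = v at *
  have huv : u < v := by
    by_contra! h
    nlinarith
  rcases Nat.eq_zero_or_pos r with rfl | hr0
  · have hval (z w : ℕ) (hz : (a + 1) * w + 0 = z) (hw : 0 < w) (hzlt : z < a * a + a + 1) :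
        a * z % (a * a + a + 1) + w = a * a + a + 1 := by
      have hwa : w ≤ a := by
        by_contra! h
        nlinarith
      obtain ⟨w, rfl⟩ := Nat.exists_eq_add_of_le' hw
      obtain ⟨d, hd⟩ := Nat.exists_eq_add_of_le (show w + 1 ≤ a * a + a + 1 by nlinarith)
      have : a * z = d + (a * a + a + 1) * w := by
        rw [← hz]
        nlinarith
      rw [this, Nat.add_mul_mod_self_left, Nat.mod_eq_of_lt (by omega)]
      omega
    have hu : 0 < u := Nat.pos_of_ne_zero (by rintro rfl; omega)
    have h₁ := hval x u hx' hu hx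
    have h₂ := hval y v hy' (by omega) hy
    omega
  · have hval (z w : ℕ) (hz : (a + 1) * w + r = z) (hzlt : z < a * a + a + 1) :
        a * z % (a * a + a + 1) + w = a * r := by
      have hwa : w ≤ a := by
        by_contra! h
        nlinarith
      obtain ⟨d, hd⟩ := Nat.exists_eq_add_of_le (show w ≤ a * r by nlinarith)
      have : a * z = d + (a * a + a + 1) * w := by
        rw [← hz]
        nlinarith
      rw [this, Nat.add_mul_mod_self_left, Nat.mod_eq_of_lt (by nlinarith)]
      omega
    have h₁ := hval x u hx' hx
    have h₂ := hval y v hy' hy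
    omega

lemma properColoring_mulPerm : (cyclicPermHG _ (mulPerm a ha)).ProperColoring (a + 1) := by
  refine ⟨fun i => i % (a + 1), fun i _ => Nat.mod_lt _ (by omega), ?_⟩
  rintro e he ⟨c, hc⟩
  simp only [cyclicPermHG, Finset.mem_filter] at he
  obtain ⟨-, i, j, k, hij, hjk, h, rfl⟩ := he
  have hi := hc i (by simp)
  have hj := hc j (by simp)
  have hk := hc k (by simp)
  have hij' : (i : ℕ) < j := hij
  have hkj := mulPerm_symm_lt (ha := ha) (by omega) hjk (hj.trans hk.symm)
  rw [clockwise_iff] at h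
  rcases Nat.eq_zero_or_pos (i : ℕ) with h0 | h0
  · have : ((mulPerm a ha).symm i : ℕ) = 0 := by simp [mulPerm_symm_val, h0]
    omega
  · have := mulPerm_symm_lt (ha := ha) h0 hij (hi.trans hj.symm)
    omega

lemma le_of_properColoring_mulPerm {k : ℕ}
    (hk : (cyclicPermHG _ (mulPerm a ha)).ProperColoring k) : a + 1 ≤ k := by
  obtain ⟨c, hc, hedge⟩ := hk
  by_contra! hlt
  obtain ⟨r, -, hr⟩ := Finset.exists_lt_card_fiber_of_mul_lt_card_of_maps_to
    (s := Finset.univ) (t := Finset.range k) (f := c) (n := a + 1)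
    (fun v hv => Finset.mem_range.2 (hc v hv))
    (by simp only [Finset.card_range, Finset.card_univ, Fintype.card_fin]; nlinarith)
  refine hr.not_ge (card_le_of_independent (ha := ha) ?_)
  simp only [Finset.mem_filter, Finset.mem_univ, true_and]
  intro i hi j hj l hl hij hjl h
  exact hedge _ ((mem_cyclicPermHG_edges hij hjl).2 h) ⟨r, by simp [hi, hj, hl]⟩

end

/-- For every `q ≥ 3` there is a cyclic permutation `[φ]` of some `{1, …, n}` with
`ω(H_[φ]) = q` and `χ(H_[φ]) = q − 1`; so the bound `χ ≤ ω − 1` is tight. -/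
theorem cyclicPermHG_bound_tight (q : ℕ) (hq : 3 ≤ q) :
    ∃ (n : ℕ) (φ : Equiv.Perm (Fin n)),
      (cyclicPermHG n φ).cliqueNumber = q ∧
      (cyclicPermHG n φ).chromaticNumber = q - 1 := by
  obtain ⟨a, rfl⟩ := Nat.exists_eq_add_of_le' (show 2 ≤ q by omega)
  have ha : 1 ≤ a := by omega
  refine ⟨_, mulPerm a ha, ?_, ?_⟩
  · refine IsGreatest.csSup_eq ⟨exists_isClique_card_eq, ?_⟩
    rintro m ⟨S, hS, rfl⟩
    exact card_le_of_isClique hS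
  · exact IsLeast.csInf_eq ⟨properColoring_mulPerm, fun k hk => le_of_properColoring_mulPerm hk⟩
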